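/- Let d ≥ 4, let k be an integer with 1 < k ≤ d/2, and a, b ∈ ℝ. Then ρ^{(d)}_{a,b} ∈ Sch_k if and only if −1/(d−1) ≤ (d+1)a + b ≤ (kd−1)/(d−1), a + (d+1)b ≤ 1, and −((d−k+1)/(kd+k−1)) a + b ≥ −1/(d−1). -/

import Mathlib

open Matrix
open scoped ComplexOrder

noncomputable section

/-- The ampliation `id_{M_k} ⊗ L` of a map `L` applied to a bipartite matrix, blockwise. -/
def idTensor {k m n : ℕ} (L : Matrix (Fin m) (Fin m) ℂ →ₗ[ℂ] Matrix (Fin n) (Fin n) ℂ)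
    (X : Matrix (Fin k × Fin m) (Fin k × Fin m) ℂ) : Matrix (Fin k × Fin n) (Fin k × Fin n) ℂ :=
  Matrix.of fun p q => L (Matrix.of fun a b => X (p.1, a) (q.1, b)) p.2 q.2

/-- `L` is `k`-positive if `id_{M_k} ⊗ L` sends positive semidefinite matrices to positive
semidefinite matrices. -/
def IsKPositive {m n : ℕ} (k : ℕ)
    (L : Matrix (Fin m) (Fin m) ℂ →ₗ[ℂ] Matrix (Fin n) (Fin n) ℂ) : Prop :=
  ∀ X : Matrix (Fin k × Fin m) (Fin k × Fin m) ℂ, X.PosSemidef → (idTensor L X).PosSemidef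

/-- The linear map `L^{(d)}_{p,q}(Z) = (1-p-q) (Tr Z / d) I_d + p Z + q Zᵀ`. -/
def Lmap (d : ℕ) (p q : ℝ) :
    Matrix (Fin d) (Fin d) ℂ →ₗ[ℂ] Matrix (Fin d) (Fin d) ℂ :=
  ((((1 - p - q : ℝ) : ℂ) / (d : ℂ)) •
      (Matrix.traceLinearMap (Fin d) ℂ ℂ).smulRight (1 : Matrix (Fin d) (Fin d) ℂ))
    + ((p : ℝ) : ℂ) • LinearMap.id
    + ((q : ℝ) : ℂ) • (Matrix.transposeLinearEquiv (Fin d) (Fin d) ℂ ℂ).toLinearMap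

/-- The maximally entangled vector `|Ω_d⟩ = (1/√d) ∑_j |jj⟩`. -/
def omegaVec (d : ℕ) : Fin d × Fin d → ℂ :=
  fun p => if p.1 = p.2 then ((1 / Real.sqrt d : ℝ) : ℂ) else 0

/-- The flip operator `F_d = ∑_{i,j} |ij⟩⟨ji|`. -/
def flipMatrix (d : ℕ) : Matrix (Fin d × Fin d) (Fin d × Fin d) ℂ :=
  Matrix.of fun p q => if p.1 = q.2 ∧ p.2 = q.1 then 1 else 0

/-- The orthogonally invariant operators
`ρ^{(d)}_{a,b} = ((1-a-b)/d²) I + a |Ω_d⟩⟨Ω_d| + (b/d) F_d`. -/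
def rho (d : ℕ) (a b : ℝ) : Matrix (Fin d × Fin d) (Fin d × Fin d) ℂ :=
  ((((1 - a - b : ℝ) : ℂ) / ((d : ℂ) ^ 2)) • (1 : Matrix (Fin d × Fin d) (Fin d × Fin d) ℂ))
    + (((a : ℝ) : ℂ) • Matrix.vecMulVec (omegaVec d) (star (omegaVec d)))
    + ((((b : ℝ) : ℂ) / (d : ℂ)) • flipMatrix d)

/-- `Sch_k`: finite sums of rank-one operators `|ξ⟩⟨ξ|` with Schmidt rank `SR(ξ) ≤ k`,
where `SR(ξ)` is the rank of the `d_A × d_B` coefficient matrix of `ξ ∈ ℂ^{d_A} ⊗ ℂ^{d_B}`. -/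
def SchmidtSet (dA dB k : ℕ) : Set (Matrix (Fin dA × Fin dB) (Fin dA × Fin dB) ℂ) :=
  {X | ∃ (N : ℕ) (ξ : Fin N → (Fin dA × Fin dB → ℂ)),
    (∀ i, (Matrix.of fun a b => ξ i (a, b)).rank ≤ k) ∧
    X = ∑ i, Matrix.vecMulVec (ξ i) (star (ξ i))}

/-!
On the span of `1`, the flip `F` and `|Ω⟩⟨Ω|`, an operator `M` is determined by its trace and its
expectations `tr (F M)` and `d ⟨Ω|M|Ω⟩`, so the question is which pairs of expectations occur in
`Sch_k`. The inequalities that bound them come from `|tr X|² ≤ rank X · tr (Xᴴ X)`, applied to a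
coefficient matrix `X` and to `X + Xᵀ`, and the vertices of the resulting polygon are attained by
pure states.

To return from these pure states to the span one would average over `O(d)`. Finite averages suffice:
averaging over the signed permutations leaves a single direction outside the span, along a quartic
harmonic. Conjugating by the orthogonal Hartley matrix, whose squared entries are at most `2 / d`,
reverses the sign of that component when `d ≥ 4`, so that a mixture of an operator and a conjugate
of it cancels the component.
-/

section TraceRank

variable {n 𝕜 : Type*} [Fintype n] [RCLike 𝕜]

theorem exists_isHermitian_mul_eq_self_trace_eq_rank (A : Matrix n n 𝕜) :
    ∃ P : Matrix n n 𝕜, P.IsHermitian ∧ P * P = P ∧ P * A = A ∧ P.trace = A.rank := by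
  classical
  let toCLM := toEuclideanCLM (n := n) (𝕜 := 𝕜)
  let basis := (EuclideanSpace.basisFun n 𝕜).toBasis
  let K := (toCLM A).range
  have trace_proj : LinearMap.trace 𝕜 _ K.starProjection.toLinearMap = A.rank := by
    rw [(A.rank_eq_finrank_range_toLin basis basis :), ← toEuclideanLin_eq_toLin_orthonormal]
    refine LinearMap.IsProj.trace ⟨fun v => K.starProjection_apply_mem v,
      fun v hv => Submodule.starProjection_eq_self_iff.mpr hv⟩
  obtain ⟨P, hP⟩ := EquivLike.surjective toCLM K.starProjection
  have toCLM_injective := EquivLike.injective toCLM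
  refine ⟨P, toCLM_injective ?_, toCLM_injective ?_, toCLM_injective ?_, ?_⟩
  · rw [← star_eq_conjTranspose, map_star, hP, (isSelfAdjoint_starProjection K).star_eq]
  · rw [map_mul, hP, K.isIdempotentElem_starProjection.eq]
  · rw [map_mul, hP]
    ext1 v
    exact Submodule.starProjection_eq_self_iff.mpr ⟨v, rfl⟩
  · rw [← trace_proj, ← hP]
    exact (Matrix.trace_toLin_eq P basis).symm

theorem star_trace_mul_trace_le_rank_mul (A : Matrix n n 𝕜) :
    star A.trace * A.trace ≤ A.rank * (Aᴴ * A).trace := by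
  obtain ⟨P, hP, hPP, hPA, hPrank⟩ := exists_isHermitian_mul_eq_self_trace_eq_rank A
  have hAP : Aᴴ * P = Aᴴ := by rw [← hP, ← conjTranspose_mul, hPA]
  rcases eq_or_ne A.rank 0 with h0 | h0
  · have hP0 : P = 0 := by
      rw [← trace_conjTranspose_mul_self_eq_zero_iff, hP.eq, hPP, hPrank, h0, Nat.cast_zero]
    have hA : A = 0 := by rw [← hPA, hP0, zero_mul]
    simp [hA]
  · have hr : (0 : 𝕜) < A.rank := by exact_mod_cast Nat.pos_of_ne_zero h0
    have key : (((A.rank : 𝕜) • A - A.trace • P)ᴴ * ((A.rank : 𝕜) • A - A.trace • P)).trace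
        = A.rank * (A.rank * (Aᴴ * A).trace - star A.trace * A.trace) := by
      simp only [conjTranspose_sub, conjTranspose_smul, star_natCast, RCLike.star_def, hP.eq,
        mul_sub, sub_mul, Matrix.mul_smul, smul_mul, hPA, hAP, hPP, trace_sub, trace_smul,
        smul_eq_mul, trace_conjTranspose, hPrank]
      ring
    have := (posSemidef_conjTranspose_mul_self ((A.rank : 𝕜) • A - A.trace • P)).trace_nonneg
    rw [key] at this
    exact sub_nonneg.mp (le_of_mul_le_mul_left (by rwa [mul_zero]) hr)

theorem rank_add_le_rank_add {m n K : Type*} [Finite m] [Fintype n] [Field K]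
    (A B : Matrix m n K) : (A + B).rank ≤ A.rank + B.rank := by
  rw [rank, mulVecLin_add]
  exact (Submodule.finrank_mono (LinearMap.range_add_le A.mulVecLin B.mulVecLin)).trans
    (Submodule.finrank_add_le_finrank_add_finrank _ _)

theorem trace_conjTranspose_transpose_mul_transpose (X : Matrix n n 𝕜) :
    (Xᵀᴴ * Xᵀ).trace = (Xᴴ * X).trace := by
  change (Xᴴᵀ * Xᵀ).trace = _
  rw [← transpose_mul, trace_transpose, trace_mul_comm]

theorem trace_conjTranspose_transpose_mul (X : Matrix n n 𝕜) :
    (Xᵀᴴ * X).trace = (Xᴴ * Xᵀ).trace := by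
  change (Xᴴᵀ * X).trace = _
  rw [← trace_transpose, transpose_mul, transpose_transpose, trace_mul_comm]

theorem trace_conjTranspose_mul_transpose_le (X : Matrix n n 𝕜) :
    (Xᴴ * Xᵀ).trace ≤ (Xᴴ * X).trace := by
  have expand : ((X - Xᵀ)ᴴ * (X - Xᵀ)).trace = 2 * ((Xᴴ * X).trace - (Xᴴ * Xᵀ).trace) := by
    simp only [conjTranspose_sub, Matrix.mul_sub, Matrix.sub_mul, trace_sub,
      trace_conjTranspose_transpose_mul_transpose, trace_conjTranspose_transpose_mul]
    ring
  have nonneg := (posSemidef_conjTranspose_mul_self (X - Xᵀ)).trace_nonneg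
  rw [expand] at nonneg
  exact sub_nonneg.mp (le_of_mul_le_mul_left (by rwa [mul_zero]) zero_lt_two)

-- Since the trace only sees the symmetric part, apply the rank bound to `X + Xᵀ`.
theorem star_trace_mul_trace_le_of_rank_le {X : Matrix n n 𝕜} {k : ℕ} (hX : X.rank ≤ k) :
    star X.trace * X.trace ≤ k * ((Xᴴ * X).trace + (Xᴴ * Xᵀ).trace) := by
  have expand : ((X + Xᵀ)ᴴ * (X + Xᵀ)).trace = 2 * ((Xᴴ * X).trace + (Xᴴ * Xᵀ).trace) := by
    simp only [conjTranspose_add, Matrix.mul_add, Matrix.add_mul, trace_add,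
      trace_conjTranspose_transpose_mul_transpose, trace_conjTranspose_transpose_mul]
    ring
  have nonneg : 0 ≤ ((X + Xᵀ)ᴴ * (X + Xᵀ)).trace :=
    (posSemidef_conjTranspose_mul_self _).trace_nonneg
  have rank_le : ((X + Xᵀ).rank : 𝕜) ≤ (2 * k : ℕ) := by
    exact_mod_cast (rank_add_le_rank_add X Xᵀ).trans (by rw [rank_transpose]; lia)
  have bound : 4 * (star X.trace * X.trace) ≤ 4 * (k * ((Xᴴ * X).trace + (Xᴴ * Xᵀ).trace)) :=
    calc 4 * (star X.trace * X.trace) = star (X + Xᵀ).trace * (X + Xᵀ).trace := by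
          rw [trace_add, trace_transpose, star_add]
          ring
      _ ≤ (X + Xᵀ).rank * ((X + Xᵀ)ᴴ * (X + Xᵀ)).trace := star_trace_mul_trace_le_rank_mul _
      _ ≤ (2 * k : ℕ) * ((X + Xᵀ)ᴴ * (X + Xᵀ)).trace := mul_le_mul_of_nonneg_right rank_le nonneg
      _ = 4 * (k * ((Xᴴ * X).trace + (Xᴴ * Xᵀ).trace)) := by
          rw [expand]
          push_cast
          ring
  exact le_of_mul_le_mul_left bound zero_lt_four

end TraceRank

open scoped Kronecker

section SchmidtCone

variable {m n : Type*}

/-- The rank-one operator `|ξ⟩⟨ξ|` of the bipartite vector `ξ = ∑ X j i |i⟩|j⟩`. The coefficient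
matrix is transposed so that `ξ` is Mathlib's column-wise vectorization `vec X`. -/
def pureState (X : Matrix n m ℂ) : Matrix (m × n) (m × n) ℂ :=
  vecMulVec (vec X) (star (vec X))

theorem smul_pureState {c : ℝ} (hc : 0 ≤ c) (X : Matrix n m ℂ) :
    c • pureState X = pureState ((√c : ℂ) • X) := by
  have hsqrt : (√c : ℂ) * √c = c := by rw [← Complex.ofReal_mul, Real.mul_self_sqrt hc]
  rw [pureState, pureState, vec_smul, star_smul, smul_vecMulVec, vecMulVec_smul, smul_smul,
    Complex.star_def, Complex.conj_ofReal, hsqrt, Complex.coe_smul]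

variable [Fintype m] [Fintype n] {k : ℕ}

/-- The cone of operators of Schmidt number at most `k`; on `ℂ^{d_A} ⊗ ℂ^{d_B}` it is
`SchmidtSet d_A d_B k`. -/
def schmidtCone (m n : Type*) [Fintype m] [Fintype n] (k : ℕ) :
    PointedCone ℝ (Matrix (m × n) (m × n) ℂ) :=
  PointedCone.hull ℝ {M | ∃ X : Matrix n m ℂ, X.rank ≤ k ∧ pureState X = M}

theorem pureState_mem_schmidtCone {X : Matrix n m ℂ} (hX : X.rank ≤ k) :
    pureState X ∈ schmidtCone m n k :=
  PointedCone.subset_hull ⟨X, hX, rfl⟩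

theorem kronecker_conj_pureState {m' n' : Type*} (A : Matrix m' m ℂ) (B : Matrix n' n ℂ)
    (X : Matrix n m ℂ) :
    (A ⊗ₖ B) * pureState X * (A ⊗ₖ B)ᴴ = pureState (B * X * Aᵀ) := by
  rw [pureState, mul_vecMulVec, vecMulVec_mul, ← star_mulVec, kronecker_mulVec_vec, pureState]

theorem kronecker_conj_mem_schmidtCone {m' n' : Type*} [Fintype m'] [Fintype n']
    (A : Matrix m' m ℂ) (B : Matrix n' n ℂ) {M : Matrix (m × n) (m × n) ℂ}
    (hM : M ∈ schmidtCone m n k) : (A ⊗ₖ B) * M * (A ⊗ₖ B)ᴴ ∈ schmidtCone m' n' k := by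
  induction hM using Submodule.span_induction with
  | mem M hM =>
    obtain ⟨X, hX, rfl⟩ := hM
    rw [kronecker_conj_pureState]
    exact pureState_mem_schmidtCone
      (((rank_mul_le_left _ _).trans (rank_mul_le_right _ _)).trans hX)
  | zero => simp
  | add M N _ _ hM hN => simpa only [Matrix.mul_add, Matrix.add_mul] using add_mem hM hN
  | smul c M _ hM => simpa only [Matrix.mul_smul, Matrix.smul_mul] using Submodule.smul_mem _ c hM

theorem SchmidtSet.sum_pureState_mem {dA dB : ℕ} {ι : Type*} [Fintype ι]
    {X : ι → Matrix (Fin dB) (Fin dA) ℂ} (hX : ∀ i, (X i).rank ≤ k) :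
    ∑ i, pureState (X i) ∈ SchmidtSet dA dB k := by
  let e := Fintype.equivFin ι
  refine ⟨Fintype.card ι, fun i => vec (X (e.symm i)), fun i => ?_, (e.symm.sum_comp _).symm⟩
  exact (rank_transpose (X (e.symm i))).trans_le (hX _)

theorem SchmidtSet.exists_eq_sum_pureState {dA dB : ℕ}
    {M : Matrix (Fin dA × Fin dB) (Fin dA × Fin dB) ℂ} (hM : M ∈ SchmidtSet dA dB k) :
    ∃ (N : ℕ) (X : Fin N → Matrix (Fin dB) (Fin dA) ℂ),
      (∀ i, (X i).rank ≤ k) ∧ M = ∑ i, pureState (X i) := by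
  obtain ⟨N, ξ, hξ, rfl⟩ := hM
  exact ⟨N, fun i => (of fun a b => ξ i (a, b))ᵀ, fun i => (rank_transpose _).trans_le (hξ i), rfl⟩

theorem mem_schmidtSet_iff {dA dB : ℕ} {M : Matrix (Fin dA × Fin dB) (Fin dA × Fin dB) ℂ} :
    M ∈ SchmidtSet dA dB k ↔ M ∈ schmidtCone (Fin dA) (Fin dB) k := by
  constructor
  · intro hM
    obtain ⟨N, X, hX, rfl⟩ := SchmidtSet.exists_eq_sum_pureState hM
    exact sum_mem fun i _ => pureState_mem_schmidtCone (hX i)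
  · intro hM
    induction hM using Submodule.span_induction with
    | mem M hM =>
      obtain ⟨X, hX, rfl⟩ := hM
      simpa using SchmidtSet.sum_pureState_mem (X := fun _ : Unit => X) fun _ => hX
    | zero =>
      simpa using SchmidtSet.sum_pureState_mem (ι := Empty) (k := k) (X := fun _ => 0) nofun
    | add M N _ _ hM hN =>
      obtain ⟨p, X, hX, rfl⟩ := SchmidtSet.exists_eq_sum_pureState hM
      obtain ⟨q, Y, hY, rfl⟩ := SchmidtSet.exists_eq_sum_pureState hN
      simpa using SchmidtSet.sum_pureState_mem (X := Sum.elim X Y) (Sum.rec hX hY)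
    | smul c M _ hM =>
      obtain ⟨p, X, hX, rfl⟩ := SchmidtSet.exists_eq_sum_pureState hM
      have hcX : ∀ i, c • pureState (X i) = pureState ((√(c : ℝ) : ℂ) • X i) :=
        fun i => smul_pureState c.2 (X i)
      simp_rw [Finset.smul_sum, hcX]
      refine SchmidtSet.sum_pureState_mem fun i => le_trans ?_ (hX i)
      rw [← Matrix.one_mul (X i), ← Matrix.smul_mul]
      exact (rank_mul_le_right _ _).trans_eq (by rw [Matrix.one_mul])

theorem trace_mul_le_trace_mul_of_mem_schmidtCone {V W M : Matrix (m × n) (m × n) ℂ}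
    (hVW : ∀ X : Matrix n m ℂ, X.rank ≤ k →
      (V * pureState X).trace ≤ (W * pureState X).trace)
    (hM : M ∈ schmidtCone m n k) : (V * M).trace ≤ (W * M).trace := by
  induction hM using Submodule.span_induction with
  | mem M hM =>
    obtain ⟨X, hX, rfl⟩ := hM
    exact hVW X hX
  | zero => simp
  | add M N _ _ hM hN => simpa only [Matrix.mul_add, trace_add] using add_le_add hM hN
  | smul c M _ hM =>
    simp only [Matrix.mul_smul, trace_smul]
    exact smul_le_smul_of_nonneg_left hM c.2

theorem trace_mul_pureState (W : Matrix (m × n) (m × n) ℂ) (X : Matrix n m ℂ) :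
    (W * pureState X).trace = star (vec X) ⬝ᵥ (W *ᵥ vec X) := by
  rw [pureState, mul_vecMulVec, trace_vecMulVec, dotProduct_comm]

theorem trace_pureState (X : Matrix n m ℂ) : (pureState X).trace = (Xᴴ * X).trace := by
  rw [pureState, trace_vecMulVec, dotProduct_comm, star_vec_dotProduct_vec]

theorem trace_pureState_mul_pureState (X Y : Matrix n m ℂ) :
    (pureState X * pureState Y).trace = star (Xᴴ * Y).trace * (Xᴴ * Y).trace := by
  rw [trace_mul_pureState, pureState, vecMulVec_mulVec, dotProduct_smul, ← star_vec_dotProduct_vec,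
    star_dotProduct, star_star]
  simp [dotProduct_comm]

end SchmidtCone

section NecessaryInequalities

/-- The flip operator `|ij⟩ ↦ |ji⟩` on `ℂⁿ ⊗ ℂⁿ`, for an arbitrary finite index type `n`. -/
def swapMatrix (n : Type*) [DecidableEq n] : Matrix (n × n) (n × n) ℂ :=
  Equiv.Perm.permMatrix ℂ (Equiv.prodComm n n)

theorem swapMatrix_apply {n : Type*} [DecidableEq n] (p q : n × n) :
    swapMatrix n p q = if p.1 = q.2 ∧ p.2 = q.1 then 1 else 0 := by
  simp [swapMatrix, Equiv.Perm.permMatrix, PEquiv.toMatrix_apply, Prod.ext_iff, and_comm]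

variable {n : Type*} [Fintype n] [DecidableEq n] {k : ℕ} {M : Matrix (n × n) (n × n) ℂ}

theorem swapMatrix_mulVec_vec (X : Matrix n n ℂ) : swapMatrix n *ᵥ vec X = vec Xᵀ := by
  rw [swapMatrix, permMatrix_mulVec, vec_transpose]
  rfl

theorem trace_swapMatrix_mul_pureState (X : Matrix n n ℂ) :
    (swapMatrix n * pureState X).trace = (Xᴴ * Xᵀ).trace := by
  rw [trace_mul_pureState, swapMatrix_mulVec_vec, star_vec_dotProduct_vec]

theorem trace_pureState_one_mul_pureState (X : Matrix n n ℂ) :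
    (pureState 1 * pureState X).trace = star X.trace * X.trace := by
  rw [trace_pureState_mul_pureState, conjTranspose_one, Matrix.one_mul]

theorem trace_pureState_one_mul_nonneg (hM : M ∈ schmidtCone n n k) :
    0 ≤ (pureState 1 * M).trace := by
  have key := trace_mul_le_trace_mul_of_mem_schmidtCone (V := 0) (W := pureState 1)
    (fun X _ => ?_) hM
  · simpa using key
  · rw [Matrix.zero_mul, trace_zero, trace_pureState_one_mul_pureState]
    exact star_mul_self_nonneg _

theorem trace_pureState_one_mul_le (hM : M ∈ schmidtCone n n k) :
    (pureState 1 * M).trace ≤ k * M.trace := by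
  have key := trace_mul_le_trace_mul_of_mem_schmidtCone (V := pureState 1) (W := (k : ℂ) • 1)
    (fun X hX => ?_) hM
  · simpa using key
  · have rank_le : (X.rank : ℂ) ≤ k := by exact_mod_cast hX
    rw [trace_pureState_one_mul_pureState, Matrix.smul_mul, Matrix.one_mul, trace_smul,
      trace_pureState, smul_eq_mul]
    exact (star_trace_mul_trace_le_rank_mul X).trans (mul_le_mul_of_nonneg_right rank_le
      (posSemidef_conjTranspose_mul_self X).trace_nonneg)

theorem trace_swapMatrix_mul_le (hM : M ∈ schmidtCone n n k) :
    (swapMatrix n * M).trace ≤ M.trace := by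
  have key := trace_mul_le_trace_mul_of_mem_schmidtCone (V := swapMatrix n) (W := 1)
    (fun X _ => ?_) hM
  · simpa using key
  · rw [trace_swapMatrix_mul_pureState, Matrix.one_mul, trace_pureState]
    exact trace_conjTranspose_mul_transpose_le X

theorem trace_pureState_one_mul_le_trace_swapMatrix (hM : M ∈ schmidtCone n n k) :
    (pureState 1 * M).trace ≤ k * (M.trace + (swapMatrix n * M).trace) := by
  have key := trace_mul_le_trace_mul_of_mem_schmidtCone (V := pureState 1)
    (W := (k : ℂ) • (1 + swapMatrix n)) (fun X hX => ?_) hM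
  · simpa [Matrix.add_mul, mul_add] using key
  · rw [trace_pureState_one_mul_pureState, Matrix.smul_mul, Matrix.add_mul, Matrix.one_mul,
      trace_smul, trace_add, trace_pureState, trace_swapMatrix_mul_pureState, smul_eq_mul]
    exact star_trace_mul_trace_le_of_rank_le hX

end NecessaryInequalities

theorem conjTranspose_map_ofReal_kronecker {n : Type*} (A : Matrix n n ℝ) :
    (A.map (↑) ⊗ₖ A.map (↑) : Matrix (n × n) (n × n) ℂ)ᴴ = Aᵀ.map (↑) ⊗ₖ Aᵀ.map (↑) := by
  ext p q
  simp

section OrthogonalAction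

variable {n : Type*} [Fintype n] [DecidableEq n] {k : ℕ}

/-- The action `M ↦ (A ⊗ A) M (A ⊗ A)ᴴ` of real matrices on operators on `ℂⁿ ⊗ ℂⁿ`. -/
def tensorConj : Matrix n n ℝ →* Module.End ℂ (Matrix (n × n) (n × n) ℂ) where
  toFun A := LinearMap.mulLeftRight ℂ
    (A.map (↑) ⊗ₖ A.map (↑), (A.map (↑) ⊗ₖ A.map (↑) : Matrix (n × n) (n × n) ℂ)ᴴ)
  map_one' := by
    ext1 M
    simp [Matrix.map_one]
  map_mul' A B := by
    have hmap : (A * B).map ((↑) : ℝ → ℂ) = A.map (↑) * B.map (↑) :=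
      Matrix.map_mul (f := Complex.ofRealHom)
    ext1 M
    simp [hmap, mul_kronecker_mul, conjTranspose_mul, Matrix.mul_assoc]

theorem tensorConj_apply (A : Matrix n n ℝ) (M : Matrix (n × n) (n × n) ℂ) :
    tensorConj A M = (A.map (↑) ⊗ₖ A.map (↑)) * M * (A.map (↑) ⊗ₖ A.map (↑))ᴴ := rfl

theorem tensorConj_mem_schmidtCone (A : Matrix n n ℝ) {M : Matrix (n × n) (n × n) ℂ}
    (hM : M ∈ schmidtCone n n k) : tensorConj A M ∈ schmidtCone n n k :=
  kronecker_conj_mem_schmidtCone _ _ hM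

theorem trace_mul_tensorConj (A : Matrix n n ℝ) (W M : Matrix (n × n) (n × n) ℂ) :
    (W * tensorConj A M).trace = (tensorConj Aᵀ W * M).trace := by
  rw [tensorConj_apply, tensorConj_apply, conjTranspose_map_ofReal_kronecker,
    conjTranspose_map_ofReal_kronecker, transpose_transpose, ← Matrix.mul_assoc, trace_mul_comm]
  simp only [Matrix.mul_assoc]

theorem commute_swapMatrix_kronecker_self (A : Matrix n n ℂ) :
    Commute (A ⊗ₖ A) (swapMatrix n) := by
  refine mulVec_injective (funext fun v => ?_)
  obtain ⟨X, rfl⟩ := vec_bijective.surjective v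
  simp only [← mulVec_mulVec, swapMatrix_mulVec_vec, kronecker_mulVec_vec, transpose_mul,
    transpose_transpose, Matrix.mul_assoc]

/-- The operators spanned by the identity, the flip and the maximally entangled projection; these
are the operators commuting with all `O ⊗ O`, `O` orthogonal. -/
def orthSpan (n : Type*) [Fintype n] [DecidableEq n] : Submodule ℂ (Matrix (n × n) (n × n) ℂ) :=
  Submodule.span ℂ {1, swapMatrix n, pureState 1}

theorem one_mem_orthSpan : 1 ∈ orthSpan n := Submodule.subset_span (by simp)

theorem swapMatrix_mem_orthSpan : swapMatrix n ∈ orthSpan n := Submodule.subset_span (by simp)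

theorem pureState_one_mem_orthSpan : pureState 1 ∈ orthSpan n := Submodule.subset_span (by simp)

theorem tensorConj_of_mem_orthSpan {A : Matrix n n ℝ} (hA : A ∈ orthogonalGroup n ℝ)
    {W : Matrix (n × n) (n × n) ℂ} (hW : W ∈ orthSpan n) : tensorConj A W = W := by
  have hAA : A.map ((↑) : ℝ → ℂ) * Aᵀ.map (↑) = 1 := by
    rw [← Matrix.map_one Complex.ofRealHom (map_zero _) (map_one _),
      ← (mem_orthogonalGroup_iff n ℝ).mp hA]
    exact (Matrix.map_mul (f := Complex.ofRealHom)).symm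
  have hker : (A.map (↑) ⊗ₖ A.map (↑) : Matrix (n × n) (n × n) ℂ) * (A.map (↑) ⊗ₖ A.map (↑))ᴴ
      = 1 := by
    rw [conjTranspose_map_ofReal_kronecker, ← mul_kronecker_mul, hAA, one_kronecker_one]
  induction hW using Submodule.span_induction with
  | mem W hW =>
    obtain rfl | rfl | rfl := hW
    · rw [tensorConj_apply, Matrix.mul_one, hker]
    · rw [tensorConj_apply, (commute_swapMatrix_kronecker_self _).eq, Matrix.mul_assoc, hker,
        Matrix.mul_one]
    · rw [tensorConj_apply, kronecker_conj_pureState, Matrix.mul_one]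
      exact congrArg pureState hAA
  | zero => exact map_zero _
  | add V W _ _ hV hW => rw [map_add, hV, hW]
  | smul c W _ hW => rw [map_smul, hW]

theorem transpose_mem_orthogonalGroup {R : Type*} [CommRing R] {A : Matrix n n R}
    (hA : A ∈ orthogonalGroup n R) : Aᵀ ∈ orthogonalGroup n R := by
  rw [mem_orthogonalGroup_iff, transpose_transpose, (mem_orthogonalGroup_iff' n R).mp hA]

theorem trace_mul_tensorConj_of_mem_orthSpan {A : Matrix n n ℝ} (hA : A ∈ orthogonalGroup n ℝ)
    {W : Matrix (n × n) (n × n) ℂ} (hW : W ∈ orthSpan n) (M : Matrix (n × n) (n × n) ℂ) :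
    (W * tensorConj A M).trace = (W * M).trace := by
  rw [trace_mul_tensorConj, tensorConj_of_mem_orthSpan (transpose_mem_orthogonalGroup hA) hW]

theorem conjTranspose_mem_orthSpan {W : Matrix (n × n) (n × n) ℂ} (hW : W ∈ orthSpan n) :
    Wᴴ ∈ orthSpan n := by
  induction hW using Submodule.span_induction with
  | mem W hW =>
    obtain rfl | rfl | rfl := hW
    · rw [conjTranspose_one]
      exact one_mem_orthSpan
    · rw [swapMatrix, conjTranspose_permMatrix]
      exact swapMatrix_mem_orthSpan
    · rw [pureState, conjTranspose_vecMulVec, star_star]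
      exact pureState_one_mem_orthSpan
  | zero => simp
  | add V W _ _ hV hW => simpa using add_mem hV hW
  | smul c W _ hW => simpa using Submodule.smul_mem _ (star c) hW

theorem eq_of_mem_orthSpan_of_trace_eq {M N : Matrix (n × n) (n × n) ℂ}
    (hM : M ∈ orthSpan n) (hN : N ∈ orthSpan n) (hone : M.trace = N.trace)
    (hswap : (swapMatrix n * M).trace = (swapMatrix n * N).trace)
    (homega : (pureState 1 * M).trace = (pureState 1 * N).trace) : M = N := by
  have htrace {W : Matrix (n × n) (n × n) ℂ} (hW : W ∈ orthSpan n) :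
      (W * (M - N)).trace = 0 := by
    induction hW using Submodule.span_induction with
    | mem W hW =>
      rw [Matrix.mul_sub, trace_sub, sub_eq_zero]
      obtain rfl | rfl | rfl := hW
      · simpa only [Matrix.one_mul] using hone
      · exact hswap
      · exact homega
    | zero => rw [Matrix.zero_mul, trace_zero]
    | add V W _ _ hV hW => rw [Matrix.add_mul, trace_add, hV, hW, add_zero]
    | smul c W _ hW => rw [Matrix.smul_mul, trace_smul, hW, smul_zero]
  rw [← sub_eq_zero, ← trace_conjTranspose_mul_self_eq_zero_iff]
  exact htrace (conjTranspose_mem_orthSpan (sub_mem hM hN))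

end OrthogonalAction

section HyperoctahedralTwirl

variable {n : Type*} [Fintype n] [DecidableEq n] {k : ℕ}

theorem intCast_mem_orthogonalGroup {A : Matrix n n ℤ} (hA : A ∈ orthogonalGroup n ℤ) :
    A.map ((↑) : ℤ → ℝ) ∈ orthogonalGroup n ℝ := by
  rw [mem_orthogonalGroup_iff, ← Matrix.map_one Int.cast Int.cast_zero Int.cast_one,
    ← (mem_orthogonalGroup_iff n ℤ).mp hA]
  exact (Matrix.map_mul (f := Int.castRingHom ℝ)).symm

theorem sum_sq_eq_one_of_mem_orthogonalGroup {R : Type*} [CommRing R] {A : Matrix n n R}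
    (hA : A ∈ orthogonalGroup n R) (i : n) : ∑ j, A i j ^ 2 = 1 := by
  have := congrFun₂ ((mem_orthogonalGroup_iff n R).mp hA) i i
  simpa [Matrix.mul_apply, sq] using this

theorem abs_le_one_of_mem_orthogonalGroup_int {A : Matrix n n ℤ} (hA : A ∈ orthogonalGroup n ℤ)
    (i j : n) : |A i j| ≤ 1 := by
  rw [← sq_le_one_iff_abs_le_one, ← sum_sq_eq_one_of_mem_orthogonalGroup hA i]
  exact Finset.single_le_sum (fun l _ => sq_nonneg (A i l)) (Finset.mem_univ j)

theorem mul_eq_zero_of_mem_orthogonalGroup_int {A : Matrix n n ℤ} (hA : A ∈ orthogonalGroup n ℤ)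
    {i j : n} (hij : i ≠ j) (l : n) : A i l * A j l = 0 := by
  by_contra! hne
  have hcol := sum_sq_eq_one_of_mem_orthogonalGroup (transpose_mem_orthogonalGroup hA) l
  have hle : A i l ^ 2 + A j l ^ 2 ≤ 1 := by
    rw [← hcol, ← Finset.sum_pair hij (f := fun a => A a l ^ 2)]
    exact Finset.sum_le_sum_of_subset_of_nonneg (Finset.subset_univ _) fun a _ _ => sq_nonneg _
  have hi : 0 < A i l ^ 2 := by have := left_ne_zero_of_mul hne; positivity
  have hj : 0 < A j l ^ 2 := by have := right_ne_zero_of_mul hne; positivity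
  lia

instance finite_orthogonalGroup_int : Finite (orthogonalGroup n ℤ) := by
  refine Set.Finite.subset (s := {A : Matrix n n ℤ | ∀ i j, |A i j| ≤ 1}) ?_
    fun A hA => abs_le_one_of_mem_orthogonalGroup_int hA
  simp only [abs_le]
  exact Set.Finite.pi' fun _ => Set.Finite.pi' fun _ => Set.finite_Icc (-1 : ℤ) 1

local instance fintypeOrthogonalGroupInt : Fintype (orthogonalGroup n ℤ) := Fintype.ofFinite _

local instance invertibleCardOrthogonalGroupInt :
    Invertible (Fintype.card (orthogonalGroup n ℤ) : ℂ) :=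
  invertibleOfNonzero (Nat.cast_ne_zero.mpr Fintype.card_ne_zero)

/-- The tensor square representation of the hyperoctahedral group `O(n, ℤ)` of signed permutation
matrices, acting on operators by conjugation. -/
def hyperoctahedralRep (n : Type*) [Fintype n] [DecidableEq n] :
    Representation ℂ (orthogonalGroup n ℤ) (Matrix (n × n) (n × n) ℂ) :=
  tensorConj.comp ((Int.castRingHom ℝ).mapMatrix.toMonoidHom.comp (orthogonalGroup n ℤ).subtype)

theorem hyperoctahedralRep_apply (g : orthogonalGroup n ℤ) :
    hyperoctahedralRep n g = tensorConj ((g : Matrix n n ℤ).map (↑)) := rfl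

theorem orthSpan_le_invariants_hyperoctahedralRep :
    orthSpan n ≤ (hyperoctahedralRep n).invariants := fun _ hW g =>
  tensorConj_of_mem_orthSpan (intCast_mem_orthogonalGroup g.2) hW

/-- The average over the hyperoctahedral group: a projection onto its invariants that preserves the
Schmidt number. -/
def hyperoctahedralTwirl (n : Type*) [Fintype n] [DecidableEq n] :
    Module.End ℂ (Matrix (n × n) (n × n) ℂ) :=
  (hyperoctahedralRep n).averageMap

theorem hyperoctahedralTwirl_mem_invariants (M : Matrix (n × n) (n × n) ℂ) :
    hyperoctahedralTwirl n M ∈ (hyperoctahedralRep n).invariants :=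
  Representation.averageMap_invariant _ _

theorem hyperoctahedralTwirl_apply (M : Matrix (n × n) (n × n) ℂ) :
    hyperoctahedralTwirl n M =
      (Fintype.card (orthogonalGroup n ℤ) : ℝ)⁻¹ • ∑ g, hyperoctahedralRep n g M := by
  rw [hyperoctahedralTwirl, Representation.averageMap, GroupAlgebra.average, ← Complex.coe_smul]
  simp

theorem hyperoctahedralTwirl_mem_schmidtCone {M : Matrix (n × n) (n × n) ℂ}
    (hM : M ∈ schmidtCone n n k) : hyperoctahedralTwirl n M ∈ schmidtCone n n k := by
  rw [hyperoctahedralTwirl_apply]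
  exact PointedCone.smul_mem _ (by positivity)
    (sum_mem fun g _ => tensorConj_mem_schmidtCone _ hM)

theorem trace_mul_hyperoctahedralTwirl {W : Matrix (n × n) (n × n) ℂ}
    (hW : W ∈ (hyperoctahedralRep n).invariants) (M : Matrix (n × n) (n × n) ℂ) :
    (W * hyperoctahedralTwirl n M).trace = (W * M).trace := by
  have hterm (g : orthogonalGroup n ℤ) : (W * hyperoctahedralRep n g M).trace = (W * M).trace := by
    rw [hyperoctahedralRep_apply, trace_mul_tensorConj, ← transpose_map]
    exact congrArg (fun V => (V * M).trace) (hW ⟨_, transpose_mem_orthogonalGroup g.2⟩)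
  simp [hyperoctahedralTwirl_apply, Matrix.mul_sum, trace_sum, hterm]

end HyperoctahedralTwirl

section HyperoctahedralInvariants

variable {n : Type*} [Fintype n] [DecidableEq n]

/-- The projection onto the span of the product vectors `|ii⟩`: the only direction, modulo
`orthSpan n`, that is fixed by all signed permutations. -/
def diagonalProjection (n : Type*) [DecidableEq n] : Matrix (n × n) (n × n) ℂ :=
  diagonal fun p => if p.1 = p.2 then 1 else 0

theorem tensorConj_diagonalProjection_apply (A : Matrix n n ℝ) (p q : n × n) :
    tensorConj A (diagonalProjection n) p q =
      ((∑ i, A p.1 i * A p.2 i * (A q.1 i * A q.2 i) : ℝ) : ℂ) := by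
  rw [tensorConj_apply, Matrix.mul_apply]
  simp [diagonalProjection, mul_diagonal, Fintype.sum_prod_type]

theorem trace_diagonalProjection_mul (M : Matrix (n × n) (n × n) ℂ) :
    (diagonalProjection n * M).trace = ∑ i, M (i, i) (i, i) := by
  simp [diagonalProjection, Matrix.trace, diagonal_mul, Fintype.sum_prod_type]

theorem diagonalProjection_mem_invariants :
    diagonalProjection n ∈ (hyperoctahedralRep n).invariants := by
  rintro ⟨A, hA⟩
  have hzero {i j : n} (hij : i ≠ j) (l : n) : (A i l : ℝ) * A j l = 0 := by
    exact_mod_cast mul_eq_zero_of_mem_orthogonalGroup_int hA hij l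
  have hone (i : n) : ∑ l, (A i l : ℝ) * A i l * (A i l * A i l) = 1 := by
    have hsq (l : n) : A i l * A i l * (A i l * A i l) = A i l ^ 2 := by
      obtain ⟨hlow, hup⟩ := abs_le.mp (abs_le_one_of_mem_orthogonalGroup_int hA i l)
      generalize A i l = z at hlow hup
      interval_cases z <;> rfl
    exact_mod_cast (Finset.sum_congr rfl fun l _ => hsq l).trans
      (sum_sq_eq_one_of_mem_orthogonalGroup hA i)
  ext ⟨i, j⟩ ⟨x, y⟩
  rw [hyperoctahedralRep_apply, tensorConj_diagonalProjection_apply]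
  rcases eq_or_ne i j with rfl | hij
  · rcases eq_or_ne x y with rfl | hxy
    · rcases eq_or_ne i x with rfl | hix
      · simp [diagonalProjection, hone]
      · have hterm (l : n) : (A i l : ℝ) * A i l * (A x l * A x l) = 0 := by
          rw [mul_mul_mul_comm, hzero hix, mul_zero]
        simp [diagonalProjection, hterm, hix]
    · have hne : ¬(i = x ∧ i = y) := fun h => hxy (h.1.symm.trans h.2)
      simp [diagonalProjection, hzero hxy, hne]
  · simp [diagonalProjection, hzero hij, hij, diagonal_apply]

theorem tensorConj_diagonal_apply (s : n → ℝ) (M : Matrix (n × n) (n × n) ℂ) (p q : n × n) :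
    tensorConj (diagonal s) M p q = (s p.1 * s p.2 * (s q.1 * s q.2) : ℝ) * M p q := by
  rw [tensorConj_apply, conjTranspose_map_ofReal_kronecker, diagonal_transpose,
    diagonal_map Complex.ofReal_zero, diagonal_kronecker_diagonal, mul_diagonal, diagonal_mul]
  push_cast
  ring

theorem tensorConj_permMatrix_apply (σ : Equiv.Perm n) (M : Matrix (n × n) (n × n) ℂ)
    (p q : n × n) :
    tensorConj (σ.permMatrix ℝ) M p q = M (Prod.map σ σ p) (Prod.map σ σ q) := by
  have hker : (σ.permMatrix ℝ).map (↑) ⊗ₖ (σ.permMatrix ℝ).map (↑)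
      = Equiv.Perm.permMatrix ℂ (σ.prodCongr σ) := by
    ext p q
    by_cases h₁ : σ p.1 = q.1 <;> by_cases h₂ : σ p.2 = q.2 <;>
      simp [Equiv.Perm.permMatrix, PEquiv.toMatrix_apply, Prod.ext_iff, h₁, h₂]
  rw [tensorConj_apply, hker, conjTranspose_permMatrix, Equiv.Perm.permMatrix,
    Equiv.Perm.permMatrix, PEquiv.toMatrix_toPEquiv_mul, PEquiv.mul_toMatrix_toPEquiv]
  rfl

theorem mul_apply_of_mem_invariants {M : Matrix (n × n) (n × n) ℂ}
    (hM : M ∈ (hyperoctahedralRep n).invariants) {s : n → ℤ} (hs : ∀ i, s i * s i = 1)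
    (p q : n × n) : (s p.1 * s p.2 * (s q.1 * s q.2) : ℤ) * M p q = M p q := by
  have hsO : diagonal s ∈ orthogonalGroup n ℤ := by
    simp [mem_orthogonalGroup_iff, hs]
  have := congrFun₂ (hM ⟨_, hsO⟩) p q
  rw [hyperoctahedralRep_apply, diagonal_map Int.cast_zero, tensorConj_diagonal_apply] at this
  exact_mod_cast this

theorem apply_map_of_mem_invariants {M : Matrix (n × n) (n × n) ℂ}
    (hM : M ∈ (hyperoctahedralRep n).invariants) (σ : Equiv.Perm n) (p q : n × n) :
    M (Prod.map σ σ p) (Prod.map σ σ q) = M p q := by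
  have hσ : σ.permMatrix ℤ ∈ orthogonalGroup n ℤ := by
    rw [mem_orthogonalGroup_iff, transpose_permMatrix, ← permMatrix_mul, inv_mul_cancel,
      permMatrix_one]
  have := congrFun₂ (hM ⟨_, hσ⟩) p q
  have hmap : (σ.permMatrix ℤ).map ((↑) : ℤ → ℝ) = σ.permMatrix ℝ := by
    ext i j
    simp [Equiv.Perm.permMatrix, PEquiv.toMatrix_apply]
  rwa [hyperoctahedralRep_apply, hmap, tensorConj_permMatrix_apply] at this

theorem exists_eq_ite_of_perm_invariant {α β : Type*} [Nonempty β] [DecidableEq α] {f : α → α → β}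
    (hf : ∀ (σ : Equiv.Perm α) i j, f (σ i) (σ j) = f i j) :
    ∃ x y, ∀ i j, f i j = if i = j then x else y := by
  have two_transitive {i j i' j' : α} : i ≠ j → i' ≠ j' → ∃ σ : Equiv.Perm α, σ i = i' ∧ σ j = j' :=
    MulAction.is_two_pretransitive_iff.mp (Equiv.Perm.isMultiplyPretransitive α 2)
  have const_diag : ∃ x, ∀ i, f i i = x := by
    rcases isEmpty_or_nonempty α with _ | ⟨⟨i⟩⟩
    · exact ⟨Classical.arbitrary β, isEmptyElim⟩
    · refine ⟨f i i, fun j => ?_⟩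
      simpa using hf (Equiv.swap i j) i i
  have const_offDiag : ∃ y, ∀ i j, i ≠ j → f i j = y := by
    by_cases h : ∃ i j : α, i ≠ j
    · obtain ⟨i, j, hij⟩ := h
      refine ⟨f i j, fun i' j' hij' => ?_⟩
      obtain ⟨σ, rfl, rfl⟩ := two_transitive hij hij'
      exact hf σ i j
    · push Not at h
      exact ⟨Classical.arbitrary β, fun i j hij => absurd (h i j) hij⟩
  obtain ⟨x, hx⟩ := const_diag
  obtain ⟨y, hy⟩ := const_offDiag
  exact ⟨x, y, by grind⟩

theorem apply_eq_zero_of_mem_invariants {M : Matrix (n × n) (n × n) ℂ}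
    (hM : M ∈ (hyperoctahedralRep n).invariants) {i j x y : n}
    (h₁ : ¬(i = x ∧ j = y)) (h₂ : ¬(i = y ∧ j = x)) (h₃ : ¬(i = j ∧ x = y)) :
    M (i, j) (x, y) = 0 := by
  -- Some index occurs an odd number of times; change the sign of that basis vector.
  have flip (l : n) := mul_apply_of_mem_invariants hM
    (s := fun i => if i = l then -1 else 1) (fun i => by split_ifs <;> rfl) (i, j) (x, y)
  have hi := flip i
  have hj := flip j
  have hx := flip x
  have hy := flip y
  push_cast at hi hj hx hy
  grind

theorem exists_sub_smul_diagonalProjection_mem_orthSpan {M : Matrix (n × n) (n × n) ℂ}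
    (hM : M ∈ (hyperoctahedralRep n).invariants) :
    ∃ c : ℂ, M - c • diagonalProjection n ∈ orthSpan n := by
  obtain ⟨x₁, y₁, h₁⟩ := exists_eq_ite_of_perm_invariant (f := fun i j => M (i, j) (i, j))
    fun σ i j => apply_map_of_mem_invariants hM σ (i, j) (i, j)
  obtain ⟨x₂, y₂, h₂⟩ := exists_eq_ite_of_perm_invariant (f := fun i j => M (i, j) (j, i))
    fun σ i j => apply_map_of_mem_invariants hM σ (i, j) (j, i)
  obtain ⟨x₃, y₃, h₃⟩ := exists_eq_ite_of_perm_invariant (f := fun i j => M (i, i) (j, j))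
    fun σ i j => apply_map_of_mem_invariants hM σ (i, i) (j, j)
  refine ⟨x₁ - y₁ - y₂ - y₃, ?_⟩
  have decomp : M - (x₁ - y₁ - y₂ - y₃) • diagonalProjection n =
      y₁ • 1 + y₂ • swapMatrix n + y₃ • pureState 1 := by
    ext ⟨i, j⟩ ⟨x, y⟩
    have unmatched := apply_eq_zero_of_mem_invariants hM (i := i) (j := j) (x := x) (y := y)
    simp only [diagonalProjection, Matrix.sub_apply, Matrix.smul_apply, Matrix.add_apply,
      diagonal_apply, one_apply, swapMatrix_apply, pureState, vecMulVec_apply, vec, Pi.star_apply,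
      Prod.mk.injEq, smul_eq_mul, RCLike.star_def, MonoidWithZeroHom.map_ite_one_zero]
    grind
  rw [decomp]
  exact add_mem (add_mem (Submodule.smul_mem _ _ one_mem_orthSpan)
    (Submodule.smul_mem _ _ swapMatrix_mem_orthSpan))
    (Submodule.smul_mem _ _ pureState_one_mem_orthSpan)

end HyperoctahedralInvariants

section QuarticHarmonic

variable {n : Type*} [Fintype n] [DecidableEq n]

theorem trace_swapMatrix : (swapMatrix n).trace = Fintype.card n := by
  have fixed (i j : n) : (i = j ∧ j = i) ↔ i = j := by grind
  rw [trace, Fintype.sum_prod_type]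
  simp [swapMatrix_apply, fixed]

theorem swapMatrix_mul_self : swapMatrix n * swapMatrix n = 1 := by
  have involution : (Equiv.prodComm n n : Equiv.Perm (n × n)) * Equiv.prodComm n n = 1 :=
    Equiv.ext fun p => p.swap_swap
  exact (permMatrix_mul _ _).symm.trans (by rw [involution, permMatrix_one])

theorem trace_swapMatrix_mul_pureState_one :
    (swapMatrix n * pureState (1 : Matrix n n ℂ)).trace = Fintype.card n := by
  rw [trace_swapMatrix_mul_pureState]
  simp

theorem trace_pureState_one : (pureState (1 : Matrix n n ℂ)).trace = Fintype.card n := by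
  rw [trace_pureState]
  simp

theorem trace_pureState_one_mul_pureState_one :
    (pureState (1 : Matrix n n ℂ) * pureState 1).trace = (Fintype.card n : ℂ) ^ 2 := by
  rw [trace_pureState_one_mul_pureState]
  simp [sq]

theorem trace_diagonalProjection_mul_eq {W : Matrix (n × n) (n × n) ℂ}
    (hW : W ∈ ({1, swapMatrix n, pureState 1} : Set _)) :
    (diagonalProjection n * W).trace = Fintype.card n := by
  rw [trace_diagonalProjection_mul]
  obtain rfl | rfl | rfl := hW
  · simp
  · simp [swapMatrix_apply]
  · simp [pureState, vecMulVec_apply, vec]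

/-- The component of the diagonal projection orthogonal to `orthSpan n`, cleared of denominators:
the quartic harmonic that obstructs a signed-permutation-invariant operator from being invariant
under the whole orthogonal group. -/
def quarticHarmonic (n : Type*) [Fintype n] [DecidableEq n] : Matrix (n × n) (n × n) ℂ :=
  (Fintype.card n + 2 : ℂ) • diagonalProjection n - (1 + swapMatrix n + pureState 1)

theorem quarticHarmonic_mem_invariants :
    quarticHarmonic n ∈ (hyperoctahedralRep n).invariants :=
  sub_mem (Submodule.smul_mem _ _ diagonalProjection_mem_invariants)
    (orthSpan_le_invariants_hyperoctahedralRep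
      (add_mem (add_mem one_mem_orthSpan swapMatrix_mem_orthSpan) pureState_one_mem_orthSpan))

theorem trace_quarticHarmonic_mul_of_mem_orthSpan {W : Matrix (n × n) (n × n) ℂ}
    (hW : W ∈ orthSpan n) : (quarticHarmonic n * W).trace = 0 := by
  induction hW using Submodule.span_induction with
  | mem W hW =>
    have hD := trace_diagonalProjection_mul_eq hW
    rw [quarticHarmonic, Matrix.sub_mul, Matrix.smul_mul, trace_sub, trace_smul, hD]
    obtain rfl | rfl | rfl := hW
    · simp only [Matrix.mul_one, trace_add, trace_one, Fintype.card_prod, Nat.cast_mul,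
        trace_swapMatrix, trace_pureState_one, smul_eq_mul]
      ring
    · simp only [Matrix.add_mul, Matrix.one_mul, trace_add, trace_one, Fintype.card_prod,
        Nat.cast_mul, trace_swapMatrix, swapMatrix_mul_self,
        trace_mul_comm (pureState 1) (swapMatrix n), trace_swapMatrix_mul_pureState_one,
        smul_eq_mul]
      ring
    · simp only [Matrix.add_mul, Matrix.one_mul, trace_add, trace_pureState_one,
        trace_swapMatrix_mul_pureState_one, trace_pureState_one_mul_pureState_one, smul_eq_mul]
      ring
  | zero => simp
  | add V W _ _ hV hW => rw [Matrix.mul_add, trace_add, hV, hW, add_zero]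
  | smul c W _ hW => rw [Matrix.mul_smul, trace_smul, hW, smul_zero]

theorem trace_quarticHarmonic_mul_tensorConj {R : Matrix n n ℝ} (hR : R ∈ orthogonalGroup n ℝ) :
    (quarticHarmonic n * tensorConj R (diagonalProjection n)).trace =
      (((Fintype.card n + 2) * ∑ i, ∑ j, R i j ^ 4 - 3 * Fintype.card n : ℝ) : ℂ) := by
  have hW : (1 + swapMatrix n + pureState 1) ∈ orthSpan n :=
    add_mem (add_mem one_mem_orthSpan swapMatrix_mem_orthSpan) pureState_one_mem_orthSpan
  have hD {W : Matrix (n × n) (n × n) ℂ} (hW : W ∈ ({1, swapMatrix n, pureState 1} : Set _)) :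
      (W * diagonalProjection n).trace = Fintype.card n := by
    rw [trace_mul_comm, trace_diagonalProjection_mul_eq hW]
  have hquartic (i : n) : tensorConj R (diagonalProjection n) (i, i) (i, i) =
      ((∑ j, R i j ^ 4 : ℝ) : ℂ) := by
    rw [tensorConj_diagonalProjection_apply]
    exact congrArg _ (Finset.sum_congr rfl fun j _ => by ring)
  rw [quarticHarmonic, Matrix.sub_mul, Matrix.smul_mul, trace_sub, trace_smul,
    trace_diagonalProjection_mul, trace_mul_tensorConj_of_mem_orthSpan hR hW, Matrix.add_mul,
    Matrix.add_mul, trace_add, trace_add, hD (by simp), hD (by simp), hD (by simp)]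
  simp only [hquartic, smul_eq_mul]
  push_cast
  ring

theorem trace_quarticHarmonic_mul_diagonalProjection :
    (quarticHarmonic n * diagonalProjection n).trace = Fintype.card n * (Fintype.card n - 1) := by
  have sum_pow_four : ∑ i, ∑ j, (1 : Matrix n n ℝ) i j ^ 4 = Fintype.card n := by
    simp [one_apply, ite_pow]
  have hone := trace_quarticHarmonic_mul_tensorConj (one_mem (orthogonalGroup n ℝ))
  rw [map_one, Module.End.one_apply, sum_pow_four] at hone
  rw [hone]
  push_cast
  ring

end QuarticHarmonic

section HartleyMatrix

variable {N : ℕ} [NeZero N]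

/-- The normalized matrix of the discrete Hartley transform: a real orthogonal matrix all of whose
entries are of size `O(1 / √N)`. -/
def hartleyMatrix (N : ℕ) [NeZero N] : Matrix (ZMod N) (ZMod N) ℝ :=
  of fun x y => ((ZMod.stdAddChar (x * y)).re + (ZMod.stdAddChar (x * y)).im) / √N

theorem hartleyMatrix_apply_sq_le (x y : ZMod N) : hartleyMatrix N x y ^ 2 ≤ 2 / N := by
  have hnorm : (ZMod.stdAddChar (x * y)).re ^ 2 + (ZMod.stdAddChar (x * y)).im ^ 2 = 1 := by
    rw [sq, sq, ← Complex.normSq_apply, Complex.normSq_eq_norm_sq, AddChar.norm_apply, one_pow]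
  rw [hartleyMatrix, of_apply, div_pow, Real.sq_sqrt (Nat.cast_nonneg N)]
  gcongr
  linarith [add_sq_le (a := (ZMod.stdAddChar (x * y)).re) (b := (ZMod.stdAddChar (x * y)).im)]

theorem sum_stdAddChar_mul (x : ZMod N) :
    ∑ z, ZMod.stdAddChar (x * z) = if x = 0 then (N : ℂ) else 0 := by
  simpa [mul_comm x] using AddChar.sum_mulShift x (ZMod.isPrimitive_stdAddChar N)

theorem hartleyMatrix_mem_orthogonalGroup : hartleyMatrix N ∈ orthogonalGroup (ZMod N) ℝ := by
  rw [mem_orthogonalGroup_iff]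
  ext x y
  have hterm (z : ZMod N) : hartleyMatrix N x z * hartleyMatrix N y z =
      ((ZMod.stdAddChar ((x - y) * z)).re + (ZMod.stdAddChar ((x + y) * z)).im) / N := by
    have hsub : ZMod.stdAddChar ((x - y) * z) =
        ZMod.stdAddChar (x * z) * star (ZMod.stdAddChar (y * z)) := by
      rw [sub_mul, sub_eq_add_neg, AddChar.map_add_eq_mul, AddChar.map_neg_eq_conj]
      rfl
    rw [hsub, add_mul, AddChar.map_add_eq_mul, hartleyMatrix, of_apply, of_apply,
      div_mul_div_comm, Real.mul_self_sqrt (Nat.cast_nonneg N)]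
    simp only [Complex.mul_re, Complex.mul_im, RCLike.star_def, Complex.conj_re, Complex.conj_im]
    ring
  have hN : (N : ℝ) ≠ 0 := Nat.cast_ne_zero.mpr (NeZero.ne N)
  simp only [Matrix.mul_apply, transpose_apply, hterm, one_apply]
  rw [← Finset.sum_div, Finset.sum_add_distrib, ← Complex.re_sum, ← Complex.im_sum,
    sum_stdAddChar_mul, sum_stdAddChar_mul]
  simp only [sub_eq_zero]
  split_ifs <;> simp [hN]

theorem exists_mem_orthogonalGroup_sq_le (n : Type*) [Fintype n] [DecidableEq n] [Nonempty n] :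
    ∃ R ∈ orthogonalGroup n ℝ, ∀ i j, R i j ^ 2 ≤ 2 / Fintype.card n := by
  have e : n ≃ ZMod (Fintype.card n) := Fintype.equivOfCardEq (ZMod.card _).symm
  refine ⟨(hartleyMatrix _).submatrix e e, ?_, fun i j => hartleyMatrix_apply_sq_le (e i) (e j)⟩
  rw [mem_orthogonalGroup_iff, transpose_submatrix, submatrix_mul_equiv,
    (mem_orthogonalGroup_iff _ ℝ).mp hartleyMatrix_mem_orthogonalGroup, submatrix_one_equiv]

theorem exists_mem_orthogonalGroup_sum_pow_four_le (n : Type*) [Fintype n] [DecidableEq n]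
    [Nonempty n] : ∃ R ∈ orthogonalGroup n ℝ, ∑ i, ∑ j, R i j ^ 4 ≤ 2 := by
  obtain ⟨R, hR, hle⟩ := exists_mem_orthogonalGroup_sq_le n
  refine ⟨R, hR, ?_⟩
  calc ∑ i, ∑ j, R i j ^ 4
      ≤ ∑ i, ∑ j, 2 / (Fintype.card n : ℝ) * R i j ^ 2 := by
        gcongr with i _ j _
        rw [show R i j ^ 4 = R i j ^ 2 * R i j ^ 2 by ring]
        exact mul_le_mul_of_nonneg_right (hle i j) (sq_nonneg _)
    _ = 2 := by
        simp_rw [← Finset.mul_sum, sum_sq_eq_one_of_mem_orthogonalGroup hR]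
        simp

end HartleyMatrix

section OrthogonalTwirl

variable {n : Type*} [Fintype n] [DecidableEq n] {k : ℕ} {M : Matrix (n × n) (n × n) ℂ}

theorem mem_orthSpan_of_trace_quarticHarmonic_mul_eq_zero (hn : 1 < Fintype.card n)
    (hM : M ∈ (hyperoctahedralRep n).invariants) (hQ : (quarticHarmonic n * M).trace = 0) :
    M ∈ orthSpan n := by
  obtain ⟨c, hc⟩ := exists_sub_smul_diagonalProjection_mem_orthSpan hM
  have htrace := trace_quarticHarmonic_mul_of_mem_orthSpan hc
  rw [Matrix.mul_sub, trace_sub, hQ, Matrix.mul_smul, trace_smul,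
    trace_quarticHarmonic_mul_diagonalProjection, zero_sub, neg_eq_zero, smul_eq_mul,
    mul_eq_zero, mul_eq_zero, sub_eq_zero, Nat.cast_eq_zero, Nat.cast_eq_one] at htrace
  obtain rfl : c = 0 := htrace.resolve_right (by omega)
  simpa using hc

theorem trace_quarticHarmonic_mul_tensorConj_of_mem_invariants
    (hM : M ∈ (hyperoctahedralRep n).invariants) {R : Matrix n n ℝ} (hR : R ∈ orthogonalGroup n ℝ) :
    (Fintype.card n * (Fintype.card n - 1)) * (quarticHarmonic n * tensorConj R M).trace =
      (quarticHarmonic n * tensorConj R (diagonalProjection n)).trace *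
        (quarticHarmonic n * M).trace := by
  obtain ⟨c, hc⟩ := exists_sub_smul_diagonalProjection_mem_orthSpan hM
  obtain ⟨W, hW, rfl⟩ : ∃ W ∈ orthSpan n, M = W + c • diagonalProjection n :=
    ⟨_, hc, (sub_add_cancel _ _).symm⟩
  simp only [map_add, map_smul, tensorConj_of_mem_orthSpan hR hW, Matrix.mul_add, Matrix.mul_smul,
    trace_add, trace_smul, trace_quarticHarmonic_mul_of_mem_orthSpan hW,
    trace_quarticHarmonic_mul_diagonalProjection, smul_eq_mul]
  ring

theorem trace_mul_hyperoctahedralTwirl_of_mem_orthSpan {W : Matrix (n × n) (n × n) ℂ}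
    (hW : W ∈ orthSpan n) (M : Matrix (n × n) (n × n) ℂ) :
    (W * hyperoctahedralTwirl n M).trace = (W * M).trace :=
  trace_mul_hyperoctahedralTwirl (orthSpan_le_invariants_hyperoctahedralRep hW) M

theorem exists_trace_quarticHarmonic_mul_eq_neg_mul (hn : 4 ≤ Fintype.card n)
    (hM : M ∈ schmidtCone n n k) (hM_inv : M ∈ (hyperoctahedralRep n).invariants) :
    ∃ N ∈ schmidtCone n n k, N ∈ (hyperoctahedralRep n).invariants ∧
      (∀ W ∈ orthSpan n, (W * N).trace = (W * M).trace) ∧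
      ∃ r : ℝ, 0 ≤ r ∧ (quarticHarmonic n * N).trace = -r * (quarticHarmonic n * M).trace := by
  have : Nonempty n := Fintype.card_pos_iff.mp (by omega)
  have hn' : (4 : ℝ) ≤ Fintype.card n := by exact_mod_cast hn
  obtain ⟨R, hR, hR₄⟩ := exists_mem_orthogonalGroup_sum_pow_four_le n
  set p : ℝ := Fintype.card n * (Fintype.card n - 1) with hp
  set q : ℝ := (Fintype.card n + 2) * ∑ i, ∑ j, R i j ^ 4 - 3 * Fintype.card n with hq
  have hp_pos : 0 < p := by nlinarith
  have hq_nonpos : q ≤ 0 := by nlinarith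
  have hharmonic : p * (quarticHarmonic n * tensorConj R M).trace =
      q * (quarticHarmonic n * M).trace := by
    rw [hq, ← trace_quarticHarmonic_mul_tensorConj hR,
      ← trace_quarticHarmonic_mul_tensorConj_of_mem_invariants hM_inv hR, hp]
    push_cast
    rfl
  refine ⟨hyperoctahedralTwirl n (tensorConj R M),
    hyperoctahedralTwirl_mem_schmidtCone (tensorConj_mem_schmidtCone R hM),
    hyperoctahedralTwirl_mem_invariants _, fun W hW => ?_,
    -q / p, div_nonneg (neg_nonneg.mpr hq_nonpos) hp_pos.le, ?_⟩
  · rw [trace_mul_hyperoctahedralTwirl_of_mem_orthSpan hW,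
      trace_mul_tensorConj_of_mem_orthSpan hR hW]
  · have hp_ne : (p : ℂ) ≠ 0 := by exact_mod_cast hp_pos.ne'
    rw [trace_mul_hyperoctahedralTwirl quarticHarmonic_mem_invariants]
    push_cast
    field_simp
    rw [mul_comm, hharmonic]

theorem exists_mem_schmidtCone_mem_orthSpan_trace_mul_eq (hn : 4 ≤ Fintype.card n)
    (hM : M ∈ schmidtCone n n k) : ∃ N ∈ schmidtCone n n k, N ∈ orthSpan n ∧
      ∀ W ∈ orthSpan n, (W * N).trace = (W * M).trace := by
  set M₁ := hyperoctahedralTwirl n M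
  have hM₁ : M₁ ∈ schmidtCone n n k := hyperoctahedralTwirl_mem_schmidtCone hM
  have hM₁_inv : M₁ ∈ (hyperoctahedralRep n).invariants := hyperoctahedralTwirl_mem_invariants M
  obtain ⟨M₂, hM₂, hM₂_inv, htrace, r, hr, hharmonic⟩ :=
    exists_trace_quarticHarmonic_mul_eq_neg_mul hn hM₁ hM₁_inv
  have hr_ne : (1 + r : ℂ) ≠ 0 := by exact_mod_cast (by linarith : 0 < 1 + r).ne'
  -- The quartic harmonics of `M₁` and `M₂` have opposite signs, and cancel in this mixture.
  refine ⟨(1 + r)⁻¹ • (M₂ + r • M₁), ?_, ?_, fun W hW => ?_⟩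
  · exact PointedCone.smul_mem _ (by positivity) (add_mem hM₂ (PointedCone.smul_mem _ hr hM₁))
  · simp only [← Complex.coe_smul]
    refine mem_orthSpan_of_trace_quarticHarmonic_mul_eq_zero (by omega)
      (Submodule.smul_mem _ _ (add_mem hM₂_inv (Submodule.smul_mem _ _ hM₁_inv))) ?_
    simp only [Matrix.mul_smul, Matrix.mul_add, trace_smul, trace_add, smul_eq_mul, hharmonic]
    ring
  · simp only [← Complex.coe_smul, Matrix.mul_smul, Matrix.mul_add, trace_smul, trace_add,
      smul_eq_mul, htrace W hW, M₁, trace_mul_hyperoctahedralTwirl_of_mem_orthSpan hW]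
    push_cast
    field_simp

end OrthogonalTwirl

section SchmidtRegion

variable {n : Type*} [Fintype n] [DecidableEq n] {k : ℕ}

/-- The set of pairs of expectations `(Tr(F M), d ⟨Ω|M|Ω⟩)` of the operators `M` of unit trace and
Schmidt number at most `k`. -/
def schmidtRegion (n : Type*) [Fintype n] [DecidableEq n] (k : ℕ) : Set (ℝ × ℝ) :=
  {p | ∃ M ∈ schmidtCone n n k, M.trace = 1 ∧ (swapMatrix n * M).trace = (p.1 : ℂ) ∧
    (pureState 1 * M).trace = (p.2 : ℂ)}

theorem convex_schmidtRegion : Convex ℝ (schmidtRegion n k) := by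
  rintro p ⟨M, hM, hM_one, hM_swap, hM_omega⟩ q ⟨N, hN, hN_one, hN_swap, hN_omega⟩ a b ha hb hab
  refine ⟨a • M + b • N,
    add_mem (PointedCone.smul_mem _ ha hM) (PointedCone.smul_mem _ hb hN), ?_, ?_, ?_⟩
  · simp only [trace_add, trace_smul, hM_one, hN_one, ← add_smul, hab, one_smul]
  · simp [Matrix.mul_add, trace_add, hM_swap, hN_swap]
  · simp [Matrix.mul_add, trace_add, hM_omega, hN_omega]

theorem mem_schmidtRegion_of_rank_le {X : Matrix n n ℂ} (hX : X.rank ≤ k) {r t s : ℝ} (hr : 0 < r)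
    (hone : (Xᴴ * X).trace = r) (hswap : (Xᴴ * Xᵀ).trace = r * t)
    (homega : star X.trace * X.trace = r * s) : (t, s) ∈ schmidtRegion n k := by
  have hr_ne : (r : ℂ) ≠ 0 := by exact_mod_cast hr.ne'
  refine ⟨r⁻¹ • pureState X,
    PointedCone.smul_mem _ (by positivity) (pureState_mem_schmidtCone hX), ?_, ?_, ?_⟩
  · rw [trace_smul, trace_pureState, hone, ← Complex.coe_smul, smul_eq_mul, Complex.ofReal_inv,
      inv_mul_cancel₀ hr_ne]
  · rw [Matrix.mul_smul, trace_smul, trace_swapMatrix_mul_pureState, hswap, ← Complex.coe_smul,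
      smul_eq_mul, Complex.ofReal_inv, inv_mul_cancel_left₀ hr_ne]
  · rw [Matrix.mul_smul, trace_smul, trace_pureState_one_mul_pureState, homega, ← Complex.coe_smul,
      smul_eq_mul, Complex.ofReal_inv, inv_mul_cancel_left₀ hr_ne]

theorem mem_schmidtRegion_of_sq_eq_one [Nontrivial n] (hk : 2 ≤ k) {c : ℝ} (hc : c ^ 2 = 1) :
    (c, 0) ∈ schmidtRegion n k := by
  obtain ⟨x, y, hxy⟩ := exists_pair_ne n
  have rank_single_le (x y : n) (z : ℂ) : (single x y z).rank ≤ 1 := by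
    have hsingle : single x y z = vecMulVec (Pi.single x z) (Pi.single y 1) := by
      ext i j
      simp [single_apply, vecMulVec_apply, Pi.single_apply, ← ite_and, and_comm, eq_comm]
    exact hsingle ▸ rank_vecMulVec_le _ _
  have hc' : (c : ℂ) * c = 1 := by rw [← sq]; exact_mod_cast hc
  refine mem_schmidtRegion_of_rank_le (X := single x y 1 + single y x (c : ℂ)) (r := 2)
    ((rank_add_le_rank_add _ _).trans ((add_le_add (rank_single_le _ _ _)
      (rank_single_le _ _ _)).trans hk)) two_pos ?_ ?_ ?_
  · simp [Matrix.mul_add, Matrix.add_mul, hxy, hxy.symm, conjTranspose_single, hc',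
      one_add_one_eq_two]
  · simp [Matrix.mul_add, Matrix.add_mul, hxy, hxy.symm, conjTranspose_single, two_mul]
  · simp [hxy, hxy.symm]

theorem submatrix_one_mul_submatrix_one {l l' : Type*} (f : l → n) (g : l' → n) :
    (1 : Matrix n n ℂ).submatrix f id * (1 : Matrix n n ℂ).submatrix id g =
      (1 : Matrix n n ℂ).submatrix f g := by
  rw [← submatrix_mul _ _ f id g Function.bijective_id, Matrix.one_mul]

variable {m : Type*} [Fintype m] [Nonempty m]

theorem mem_schmidtRegion_of_isometry [DecidableEq m]
    {V : Matrix n m ℂ} {c w : ℝ} (hc : c ≠ 0) (hV : Vᴴ * V = (c : ℂ) • 1)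
    (hw : Vᵀ * V = (w : ℂ) • 1) :
    ((w / c) ^ 2, (Fintype.card m : ℝ)) ∈ schmidtRegion n (Fintype.card m) := by
  have hc' : (c : ℂ) ≠ 0 := by exact_mod_cast hc
  have hw' : Vᴴ * Vᴴᵀ = (w : ℂ) • 1 := by
    simpa [conjTranspose_transpose_eq_transpose_conjTranspose] using congrArg conjTranspose hw
  refine mem_schmidtRegion_of_rank_le (X := V * Vᴴ) (r := c ^ 2 * Fintype.card m)
    ((rank_mul_le_left _ _).trans (rank_le_card_width V)) (by positivity) ?_ ?_ ?_
  · rw [conjTranspose_mul, conjTranspose_conjTranspose, ← Matrix.mul_assoc, trace_mul_comm,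
      Matrix.mul_assoc V, hV]
    simp only [Matrix.mul_smul, Matrix.mul_one, hV, trace_smul, trace_one, smul_eq_mul]
    push_cast
    ring
  · rw [conjTranspose_mul, conjTranspose_conjTranspose, transpose_mul, ← Matrix.mul_assoc,
      trace_mul_comm, Matrix.mul_assoc V, hw']
    simp only [Matrix.mul_smul, Matrix.mul_one, hw, trace_smul, trace_one, smul_eq_mul]
    push_cast
    field_simp
  · rw [trace_mul_comm, hV]
    simp only [trace_smul, trace_one, smul_eq_mul, star_mul', star_natCast, Complex.star_def,
      Complex.conj_ofReal]
    push_cast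
    ring

theorem mem_schmidtRegion_one (f : m ↪ n) :
    ((1 : ℝ), (Fintype.card m : ℝ)) ∈ schmidtRegion n (Fintype.card m) := by
  classical
  have hf : (1 : Matrix n n ℂ).submatrix f id * (1 : Matrix n n ℂ).submatrix id f = 1 := by
    rw [submatrix_one_mul_submatrix_one, submatrix_one_embedding]
  simpa using mem_schmidtRegion_of_isometry (V := (1 : Matrix n n ℂ).submatrix id f)
    (c := 1) (w := 1) one_ne_zero (by simp [hf]) (by simp [hf])

/-- Witnessed by an isometry onto a totally isotropic subspace. -/
theorem mem_schmidtRegion_zero (f : m ⊕ m ↪ n) :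
    ((0 : ℝ), (Fintype.card m : ℝ)) ∈ schmidtRegion n (Fintype.card m) := by
  classical
  have horth (g h : m → m ⊕ m) : (1 : Matrix n n ℂ).submatrix (f ∘ g) id *
      (1 : Matrix n n ℂ).submatrix id (f ∘ h) = (1 : Matrix (m ⊕ m) (m ⊕ m) ℂ).submatrix g h := by
    rw [submatrix_one_mul_submatrix_one, ← submatrix_submatrix, submatrix_one_embedding]
  have hinl : (1 : Matrix (m ⊕ m) (m ⊕ m) ℂ).submatrix Sum.inl Sum.inl = 1 :=
    submatrix_one _ Sum.inl_injective
  have hinr : (1 : Matrix (m ⊕ m) (m ⊕ m) ℂ).submatrix Sum.inr Sum.inr = 1 :=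
    submatrix_one _ Sum.inr_injective
  have hdisj : (1 : Matrix (m ⊕ m) (m ⊕ m) ℂ).submatrix Sum.inl Sum.inr = 0 := by ext; simp
  have hdisj' : (1 : Matrix (m ⊕ m) (m ⊕ m) ℂ).submatrix Sum.inr Sum.inl = 0 := by ext; simp
  simpa using mem_schmidtRegion_of_isometry (V := (1 : Matrix n n ℂ).submatrix id (f ∘ Sum.inl) +
      Complex.I • (1 : Matrix n n ℂ).submatrix id (f ∘ Sum.inr)) (c := 2) (w := 0) two_ne_zero
    (by simp [Matrix.add_mul, Matrix.mul_add, horth, hinl, hinr, hdisj, hdisj', smul_smul,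
          ← two_smul ℂ (1 : Matrix m m ℂ)])
    (by simp [Matrix.add_mul, Matrix.mul_add, horth, hinl, hinr, hdisj, hdisj', smul_smul])

theorem mem_schmidtRegion_iff (hk : 1 < k) (hkn : 2 * k ≤ Fintype.card n) {t s : ℝ} :
    (t, s) ∈ schmidtRegion n k ↔ 0 ≤ s ∧ s ≤ k ∧ t ≤ 1 ∧ s ≤ k * (1 + t) := by
  have : Nonempty (Fin k) := ⟨⟨0, by omega⟩⟩
  have : Nontrivial n := Fintype.one_lt_card_iff_nontrivial.mp (by omega)
  obtain ⟨f⟩ : Nonempty (Fin k ⊕ Fin k ↪ n) :=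
    Function.Embedding.nonempty_of_card_le (by simpa [← two_mul] using hkn)
  constructor
  · rintro ⟨M, hM, hone, hswap, homega⟩
    have nonneg := trace_pureState_one_mul_nonneg hM
    have le_card := trace_pureState_one_mul_le hM
    have swap_le := trace_swapMatrix_mul_le hM
    have le_swap := trace_pureState_one_mul_le_trace_swapMatrix hM
    rw [homega] at nonneg le_card le_swap
    rw [hone] at le_card swap_le le_swap
    rw [hswap] at swap_le le_swap
    norm_cast at nonneg le_card swap_le le_swap
    exact ⟨nonneg, by simpa using le_card, swap_le, le_swap⟩
  · rintro ⟨hs, hsk, ht, hst⟩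
    have antisymm : ((-1 : ℝ), (0 : ℝ)) ∈ schmidtRegion n k :=
      mem_schmidtRegion_of_sq_eq_one hk (by norm_num)
    have symm : ((1 : ℝ), (0 : ℝ)) ∈ schmidtRegion n k :=
      mem_schmidtRegion_of_sq_eq_one hk (by norm_num)
    have real : ((1 : ℝ), (k : ℝ)) ∈ schmidtRegion n k := by
      simpa using mem_schmidtRegion_one (Function.Embedding.inl.trans f)
    have isotropic : ((0 : ℝ), (k : ℝ)) ∈ schmidtRegion n k := by
      simpa using mem_schmidtRegion_zero f
    have hk_pos : (0 : ℝ) < k := by positivity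
    obtain ⟨c, rfl⟩ : ∃ c : ℝ, s = c * k := ⟨s / k, by field_simp⟩
    have hc_nonneg : 0 ≤ c := nonneg_of_mul_nonneg_left hs hk_pos
    have hc_le_one : c ≤ 1 := by nlinarith
    have hc_le : c ≤ 1 + t := by nlinarith
    have left := convex_schmidtRegion antisymm isotropic (sub_nonneg.mpr hc_le_one) hc_nonneg
      (sub_add_cancel 1 c)
    have right := convex_schmidtRegion symm real (sub_nonneg.mpr hc_le_one) hc_nonneg
      (sub_add_cancel 1 c)
    have hden : 0 < 2 - c := by linarith
    convert convex_schmidtRegion left right (a := (1 - t) / (2 - c)) (b := (1 + t - c) / (2 - c))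
      (div_nonneg (by linarith) hden.le) (div_nonneg (by linarith) hden.le)
      (by field_simp; ring) using 1
    simp only [Prod.smul_mk, Prod.mk_add_mk, smul_eq_mul, Prod.mk.injEq]
    constructor <;> field_simp <;> ring

theorem mem_schmidtCone_iff_mem_schmidtRegion (hn : 4 ≤ Fintype.card n)
    {M : Matrix (n × n) (n × n) ℂ} (hM : M ∈ orthSpan n) {t s : ℝ} (hone : M.trace = 1)
    (hswap : (swapMatrix n * M).trace = (t : ℂ)) (homega : (pureState 1 * M).trace = (s : ℂ)) :
    M ∈ schmidtCone n n k ↔ (t, s) ∈ schmidtRegion n k := by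
  refine ⟨fun h => ⟨M, h, hone, hswap, homega⟩, ?_⟩
  rintro ⟨L, hL, hL_one, hL_swap, hL_omega⟩
  obtain ⟨N, hN, hN_span, htrace⟩ := exists_mem_schmidtCone_mem_orthSpan_trace_mul_eq hn hL
  suffices M = N from this ▸ hN
  refine eq_of_mem_orthSpan_of_trace_eq hM hN_span ?_ ?_ ?_
  · simpa [hone, hL_one] using (htrace 1 one_mem_orthSpan).symm
  · rw [htrace _ swapMatrix_mem_orthSpan, hswap, hL_swap]
  · rw [htrace _ pureState_one_mem_orthSpan, homega, hL_omega]

end SchmidtRegion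

section Rho

theorem flipMatrix_eq_swapMatrix (d : ℕ) : flipMatrix d = swapMatrix (Fin d) := by
  ext p q
  rw [flipMatrix, of_apply, swapMatrix_apply]

theorem vecMulVec_omegaVec (d : ℕ) :
    vecMulVec (omegaVec d) (star (omegaVec d)) =
      (d : ℂ)⁻¹ • pureState (1 : Matrix (Fin d) (Fin d) ℂ) := by
  have homega : omegaVec d = ((√d : ℝ) : ℂ)⁻¹ • vec (1 : Matrix (Fin d) (Fin d) ℂ) := by
    ext p
    simp [omegaVec, vec, one_apply, eq_comm]
  have hsqrt : ((√d : ℝ) : ℂ)⁻¹ * ((√d : ℝ) : ℂ)⁻¹ = (d : ℂ)⁻¹ := by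
    rw [← mul_inv, ← Complex.ofReal_mul, Real.mul_self_sqrt (Nat.cast_nonneg d),
      Complex.ofReal_natCast]
  rw [homega, star_smul, smul_vecMulVec, vecMulVec_smul, smul_smul, pureState, star_inv₀,
    Complex.star_def, Complex.conj_ofReal, hsqrt]

theorem rho_eq (d : ℕ) (a b : ℝ) :
    rho d a b = (((1 - a - b) / d ^ 2 : ℝ) : ℂ) • 1 + ((a / d : ℝ) : ℂ) • pureState 1 +
      ((b / d : ℝ) : ℂ) • swapMatrix (Fin d) := by
  rw [rho, vecMulVec_omegaVec, flipMatrix_eq_swapMatrix, smul_smul]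
  push_cast
  rw [div_eq_mul_inv (a : ℂ)]

theorem rho_mem_orthSpan (d : ℕ) (a b : ℝ) : rho d a b ∈ orthSpan (Fin d) := by
  rw [rho_eq]
  exact add_mem (add_mem (Submodule.smul_mem _ _ one_mem_orthSpan)
    (Submodule.smul_mem _ _ pureState_one_mem_orthSpan))
    (Submodule.smul_mem _ _ swapMatrix_mem_orthSpan)

variable {d : ℕ}

theorem trace_rho (hd : d ≠ 0) (a b : ℝ) : (rho d a b).trace = 1 := by
  have hd' : (d : ℂ) ≠ 0 := Nat.cast_ne_zero.mpr hd
  simp only [rho_eq, trace_add, trace_smul, trace_one, trace_pureState_one, trace_swapMatrix,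
    Fintype.card_prod, Fintype.card_fin, smul_eq_mul]
  push_cast
  field_simp
  ring

theorem trace_swapMatrix_mul_rho (hd : d ≠ 0) (a b : ℝ) :
    (swapMatrix (Fin d) * rho d a b).trace =
      (((1 + (d - 1) * (a + (d + 1) * b)) / d : ℝ) : ℂ) := by
  have hd' : (d : ℂ) ≠ 0 := Nat.cast_ne_zero.mpr hd
  simp only [rho_eq, Matrix.mul_add, Matrix.mul_smul, Matrix.mul_one, trace_add, trace_smul,
    trace_one, trace_swapMatrix, swapMatrix_mul_self, trace_swapMatrix_mul_pureState_one,
    Fintype.card_prod, Fintype.card_fin, smul_eq_mul]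
  push_cast
  field_simp
  ring

theorem trace_pureState_one_mul_rho (hd : d ≠ 0) (a b : ℝ) :
    (pureState 1 * rho d a b).trace = (((1 + (d - 1) * ((d + 1) * a + b)) / d : ℝ) : ℂ) := by
  have hd' : (d : ℂ) ≠ 0 := Nat.cast_ne_zero.mpr hd
  simp only [rho_eq, Matrix.mul_add, Matrix.mul_smul, Matrix.mul_one, trace_add, trace_smul,
    trace_pureState_one, trace_pureState_one_mul_pureState_one,
    trace_mul_comm (pureState 1) (swapMatrix (Fin d)), trace_swapMatrix_mul_pureState_one,
    Fintype.card_fin, smul_eq_mul]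
  push_cast
  field_simp
  ring

theorem expectation_bounds_iff_parameter_bounds {d k : ℝ} (hd : 1 < d) (hk : 1 ≤ k) (a b : ℝ) :
    (0 ≤ (1 + (d - 1) * ((d + 1) * a + b)) / d ∧
      (1 + (d - 1) * ((d + 1) * a + b)) / d ≤ k ∧
      (1 + (d - 1) * (a + (d + 1) * b)) / d ≤ 1 ∧
      (1 + (d - 1) * ((d + 1) * a + b)) / d ≤
        k * (1 + (1 + (d - 1) * (a + (d + 1) * b)) / d)) ↔
      (-(1 / (d - 1)) ≤ (d + 1) * a + b ∧
       (d + 1) * a + b ≤ (k * d - 1) / (d - 1) ∧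
       a + (d + 1) * b ≤ 1 ∧
       -(1 / (d - 1)) ≤ -((d - k + 1) / (k * d + k - 1)) * a + b) := by
  have hd_pos : 0 < d := by linarith
  have hd_sub_pos : 0 < d - 1 := by linarith
  have hden_pos : 0 < k * d + k - 1 := by nlinarith
  have factor {x y v w c : ℝ} (hc : 0 < c) (h : w - v = (y - x) * c) : x ≤ y ↔ v ≤ w := by
    rw [← sub_nonneg, ← sub_nonneg (a := w), h, mul_nonneg_iff_of_pos_right hc]
  have scale_pos : 0 < d / (d - 1) := div_pos hd_pos hd_sub_pos
  have scale_pos' : 0 < d / ((d - 1) * (k * d + k - 1)) :=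
    div_pos hd_pos (mul_pos hd_sub_pos hden_pos)
  refine and_congr (factor scale_pos ?_) (and_congr (factor scale_pos ?_)
    (and_congr (factor scale_pos ?_) (factor scale_pos' ?_)))
  · field_simp
    ring
  · field_simp
    ring
  · field_simp
    ring
  · have hden_ne := hden_pos.ne'
    set c := k * d + k - 1 with hc
    field_simp
    rw [hc]
    ring

end Rho

/-- For `d ≥ 4` and an integer `k` with `1 < k ≤ d/2`,
`ρ^{(d)}_{a,b} ∈ Sch_k` iff `-1/(d-1) ≤ (d+1)a + b ≤ (kd-1)/(d-1)`, `a + (d+1)b ≤ 1` and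
`-((d-k+1)/(kd+k-1)) a + b ≥ -1/(d-1)`. -/
theorem rho_schmidtNumber_iff_small {d k : ℕ} (hd : 4 ≤ d) (hk : 1 < k) (hkd : 2 * k ≤ d)
    (a b : ℝ) :
    rho d a b ∈ SchmidtSet d d k ↔
      (-(1 / ((d : ℝ) - 1)) ≤ ((d : ℝ) + 1) * a + b ∧
       ((d : ℝ) + 1) * a + b ≤ ((k : ℝ) * d - 1) / ((d : ℝ) - 1) ∧
       a + ((d : ℝ) + 1) * b ≤ 1 ∧
       -(1 / ((d : ℝ) - 1)) ≤ -(((d : ℝ) - k + 1) / ((k : ℝ) * d + k - 1)) * a + b) := by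
  have hd_ne : d ≠ 0 := by omega
  have hcard : Fintype.card (Fin d) = d := Fintype.card_fin d
  rw [mem_schmidtSet_iff, mem_schmidtCone_iff_mem_schmidtRegion (by rwa [hcard])
    (rho_mem_orthSpan d a b) (trace_rho hd_ne a b) (trace_swapMatrix_mul_rho hd_ne a b)
    (trace_pureState_one_mul_rho hd_ne a b), mem_schmidtRegion_iff hk (by rwa [hcard])]
  exact expectation_bounds_iff_parameter_bounds (by exact_mod_cast (by omega : 1 < d))
    (by exact_mod_cast hk.le) a b

end
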